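/- arXiv:2504.14710 — 2 statements merged into one kernel-verified Lean document; each statement's English description precedes it below -/
import Mathlib

section
/- Let α ∈ ℝ with α ≠ 0, let s ∈ ℕ, and let S be a differentiable, positively (α−1)-homogeneous F-valued anisotropic (s+1)-covariant tensor on A. Then there exists a unique pair (T, R), where T is a differentiable, positively α-homogeneous F-valued anisotropic s-covariant tensor on A and R is an F-valued anisotropic (s+1)-covariant tensor on A with ι_C R = 0, such that S = ∂̇T + R. Moreover, necessarily T = (1/α)·ι_C S and R = S − (1/α)·∂̇(ι_C S). (The direct-sum decomposition h_{α−1}T_{s+1} = Img(∂̇) ⊕ Ker(ι_C) of Proposition 2.1, equation (2.6).) -/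
/-!
The key fact is Euler's identity: a differentiable positively `α`-homogeneous map `T` satisfies
`DT(v) v = α T(v)` (`fderiv_apply_self_of_homogeneous`), which says `ι_C (∂̇T) = α T`. Applying
`ι_C` to `S = ∂̇T + R` with `ι_C R = 0` therefore gives `ι_C S = α T`, and this determines `T`,
then `R`. Conversely, `ι_C S` is differentiable (it is a continuous bilinear expression in `v` and
`S v`) and positively `α`-homogeneous when `S` is `(α - 1)`-homogeneous, so `T = α⁻¹ ι_C S` and
`R = S - ∂̇T` form a decomposition, again by Euler's identity.
-/

/-- The Liouville contraction `ι_C S` of an anisotropic `(s+1)`-covariant tensor `S`: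
evaluation of the last argument at the base point, `(ι_C S)(v)(w₁,…,w_s) = S(v)(w₁,…,w_s,v)`. -/
noncomputable def iotaC {E F : Type*} [NormedAddCommGroup E] [NormedSpace ℝ E]
    [NormedAddCommGroup F] [NormedSpace ℝ F] {s : ℕ}
    (S : E → ContinuousMultilinearMap ℝ (fun _ : Fin (s + 1) => E) F) :
    E → ContinuousMultilinearMap ℝ (fun _ : Fin s => E) F :=
  fun v => (ContinuousLinearMap.apply ℝ F v).compContinuousMultilinearMap
    (continuousMultilinearCurryRightEquiv' ℝ s E F (S v))

theorem iotaC_apply {E F : Type*} [NormedAddCommGroup E] [NormedSpace ℝ E]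
    [NormedAddCommGroup F] [NormedSpace ℝ F] {s : ℕ}
    (S : E → ContinuousMultilinearMap ℝ (fun _ : Fin (s + 1) => E) F) (v : E) (w : Fin s → E) :
    iotaC S v w = S v (Fin.snoc w v) := rfl

/-- Stated for abstract normed spaces because on spaces of multilinear maps unification does not
recover the normed structure from the underlying topological one. -/
theorem differentiableAt_bilinear {E G H K : Type*} [NormedAddCommGroup E] [NormedSpace ℝ E]
    [NormedAddCommGroup G] [NormedSpace ℝ G] [NormedAddCommGroup H] [NormedSpace ℝ H]
    [NormedAddCommGroup K] [NormedSpace ℝ K] (L : E →L[ℝ] G →L[ℝ] H) (C : K ≃L[ℝ] G)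
    {S : E → K} {v : E} (hS : DifferentiableAt ℝ S v) :
    DifferentiableAt ℝ (fun x => L x (C (S x))) v := by
  fun_prop

theorem iotaC_differentiableAt {E F : Type*} [NormedAddCommGroup E] [NormedSpace ℝ E]
    [NormedAddCommGroup F] [NormedSpace ℝ F] {s : ℕ}
    {S : E → ContinuousMultilinearMap ℝ (fun _ : Fin (s + 1) => E) F} {v : E}
    (hS : DifferentiableAt ℝ S v) : DifferentiableAt ℝ (iotaC S) v :=
  differentiableAt_bilinear (E := E)
    (G := ContinuousMultilinearMap ℝ (fun _ : Fin s => E) (E →L[ℝ] F))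
    (H := ContinuousMultilinearMap ℝ (fun _ : Fin s => E) F)
    (K := ContinuousMultilinearMap ℝ (fun _ : Fin (s + 1) => E) F)
    ((ContinuousLinearMap.compContinuousMultilinearMapL ℝ (fun _ : Fin s => E) (E →L[ℝ] F) F).comp
      (ContinuousLinearMap.apply ℝ F))
    (continuousMultilinearCurryRightEquiv' ℝ s E F).toContinuousLinearEquiv hS

/-- Contracting the last slot with `lam • v` contributes one more factor `lam`, which raises the
degree of homogeneity by one. -/
theorem iotaC_homogeneous {E F : Type*} [NormedAddCommGroup E] [NormedSpace ℝ E]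
    [NormedAddCommGroup F] [NormedSpace ℝ F] {s : ℕ} {α : ℝ}
    {S : E → ContinuousMultilinearMap ℝ (fun _ : Fin (s + 1) => E) F} {v : E} {lam : ℝ}
    (hlam : 0 < lam) (hS : S (lam • v) = lam ^ (α - 1) • S v) :
    iotaC S (lam • v) = lam ^ α • iotaC S v := by
  ext w
  have h : S v (Fin.snoc w (lam • v)) = lam • S v (Fin.snoc w v) :=
    ((continuousMultilinearCurryRightEquiv' ℝ s E F (S v)) w).map_smul lam v
  rw [iotaC_apply, hS, smul_apply, smul_apply, iotaC_apply, h, smul_smul,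
    ← Real.rpow_add_one hlam.ne', sub_add_cancel]

/-- **Euler's identity** for positively homogeneous maps, from homogeneity along a single ray:
both sides are the derivative of `lam ↦ T (lam • v)` at `lam = 1`. -/
theorem fderiv_apply_self_of_homogeneous {E G : Type*} [NormedAddCommGroup E] [NormedSpace ℝ E]
    [NormedAddCommGroup G] [NormedSpace ℝ G] {T : E → G} {v : E} {α : ℝ}
    (hT : DifferentiableAt ℝ T v) (hhom : ∀ lam : ℝ, 0 < lam → T (lam • v) = lam ^ α • T v) :
    fderiv ℝ T v v = α • T v := by
  have h1 : HasDerivAt (fun lam : ℝ => T (lam • v)) (fderiv ℝ T v v) 1 := by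
    have hl : HasDerivAt (fun lam : ℝ => lam • v) v 1 := by
      simpa using (hasDerivAt_id (1 : ℝ)).smul_const v
    have hT' : HasFDerivAt T (fderiv ℝ T v) ((1 : ℝ) • v) := by
      simpa using hT.hasFDerivAt
    exact hT'.comp_hasDerivAt 1 hl
  have h2 : HasDerivAt (fun lam : ℝ => lam ^ α • T v) (α • T v) 1 := by
    simpa using (Real.hasDerivAt_rpow_const (x := 1) (p := α) (Or.inl one_ne_zero)).smul_const (T v)
  refine h1.unique (h2.congr_of_eventuallyEq ?_)
  filter_upwards [lt_mem_nhds (zero_lt_one (α := ℝ))] with lam hlam using hhom lam hlam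

/-- The vertical derivative `∂̇T` as an `(s+1)`-covariant tensor, the argument of the derivative
being the last one. -/
noncomputable def vertDeriv {E F : Type*} [NormedAddCommGroup E] [NormedSpace ℝ E]
    [NormedAddCommGroup F] [NormedSpace ℝ F] {s : ℕ}
    (T : E → ContinuousMultilinearMap ℝ (fun _ : Fin s => E) F) :
    E → ContinuousMultilinearMap ℝ (fun _ : Fin (s + 1) => E) F :=
  fun v => (continuousMultilinearCurryRightEquiv' ℝ s E F).symm (fderiv ℝ T v).flipMultilinear

theorem vertDeriv_apply {E F : Type*} [NormedAddCommGroup E] [NormedSpace ℝ E]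
    [NormedAddCommGroup F] [NormedSpace ℝ F] {s : ℕ}
    (T : E → ContinuousMultilinearMap ℝ (fun _ : Fin s => E) F) (v : E) (w : Fin (s + 1) → E) :
    vertDeriv T v w = (fderiv ℝ T v (w (Fin.last s))) (fun i : Fin s => w i.castSucc) := rfl

/-- **The direct-sum decomposition `h_{α−1}T_{s+1} = Img(∂̇) ⊕ Ker(ι_C)`** (Proposition 2.1,
equation (2.6)): for `α ≠ 0` and a differentiable, positively `(α−1)`-homogeneous
`(s+1)`-covariant tensor `S` on the conic open set `A ⊆ E \ {0}`, there is a unique pair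
`(T, R)` with `T` differentiable and positively `α`-homogeneous, `ι_C R = 0`, and
`S = ∂̇T + R` (the vertical derivative's argument placed last); moreover necessarily
`T = (1/α)·ι_C S` and `R = S − (1/α)·∂̇(ι_C S)`. -/
theorem stmt_4
    {E F : Type*} [NormedAddCommGroup E] [NormedSpace ℝ E]
    [NormedAddCommGroup F] [NormedSpace ℝ F]
    (A : Set E) (hA_open : IsOpen A) (hA_ne : A.Nonempty)
    (hA_nz : ∀ v ∈ A, v ≠ 0)
    (hA_conic : ∀ v ∈ A, ∀ lam : ℝ, 0 < lam → lam • v ∈ A)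
    (α : ℝ) (hα : α ≠ 0) (s : ℕ)
    (S : E → ContinuousMultilinearMap ℝ (fun _ : Fin (s + 1) => E) F)
    (hS_diff : ∀ v ∈ A, DifferentiableAt ℝ S v)
    (hS_hom : ∀ v ∈ A, ∀ lam : ℝ, 0 < lam → S (lam • v) = lam ^ (α - 1) • S v) :
    ∃ (T : E → ContinuousMultilinearMap ℝ (fun _ : Fin s => E) F)
      (R : E → ContinuousMultilinearMap ℝ (fun _ : Fin (s + 1) => E) F),
      ((∀ v ∈ A, DifferentiableAt ℝ T v) ∧
        (∀ v ∈ A, ∀ lam : ℝ, 0 < lam → T (lam • v) = lam ^ α • T v) ∧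
        (∀ v ∈ A, ∀ w : Fin s → E, R v (Fin.snoc w v) = 0) ∧
        (∀ v ∈ A, ∀ w : Fin (s + 1) → E,
          S v w = (fderiv ℝ T v (w (Fin.last s))) (fun i : Fin s => w i.castSucc) + R v w)) ∧
      (∀ v ∈ A, T v = (1 / α) • iotaC S v) ∧
      (∀ v ∈ A, ∀ w : Fin (s + 1) → E,
        R v w = S v w -
          (1 / α) • (fderiv ℝ (iotaC S) v (w (Fin.last s))) (fun i : Fin s => w i.castSucc)) ∧
      (∀ (T' : E → ContinuousMultilinearMap ℝ (fun _ : Fin s => E) F)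
          (R' : E → ContinuousMultilinearMap ℝ (fun _ : Fin (s + 1) => E) F),
        ((∀ v ∈ A, DifferentiableAt ℝ T' v) ∧
          (∀ v ∈ A, ∀ lam : ℝ, 0 < lam → T' (lam • v) = lam ^ α • T' v) ∧
          (∀ v ∈ A, ∀ w : Fin s → E, R' v (Fin.snoc w v) = 0) ∧
          (∀ v ∈ A, ∀ w : Fin (s + 1) → E,
            S v w =
              (fderiv ℝ T' v (w (Fin.last s))) (fun i : Fin s => w i.castSucc) + R' v w)) →
        (∀ v ∈ A, T' v = T v) ∧ (∀ v ∈ A, R' v = R v)) := by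
  set T : E → ContinuousMultilinearMap ℝ (fun _ : Fin s => E) F := (1 / α) • iotaC S with hTdef
  have hT_diff : ∀ v ∈ A, DifferentiableAt ℝ T v := fun v hv =>
    (iotaC_differentiableAt (hS_diff v hv)).const_smul (1 / α)
  have hT_hom : ∀ v ∈ A, ∀ lam : ℝ, 0 < lam → T (lam • v) = lam ^ α • T v := by
    intro v hv lam hlam
    simp only [hTdef, Pi.smul_apply]
    rw [iotaC_homogeneous hlam (hS_hom v hv lam hlam), smul_comm]
  refine ⟨T, fun v => S v - vertDeriv T v, ⟨hT_diff, hT_hom, ?_, ?_⟩, fun v _ => rfl, ?_, ?_⟩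
  · intro v hv w
    rw [sub_apply, vertDeriv_apply]
    simp only [Fin.snoc_last, Fin.snoc_castSucc]
    rw [fderiv_apply_self_of_homogeneous (hT_diff v hv) (hT_hom v hv), hTdef, Pi.smul_apply,
      smul_smul, mul_one_div_cancel hα, one_smul, iotaC_apply, sub_self]
  · intro v _ w
    rw [sub_apply, vertDeriv_apply, add_sub_cancel]
  · intro v hv w
    rw [sub_apply, vertDeriv_apply, hTdef,
      fderiv_const_smul (iotaC_differentiableAt (hS_diff v hv)) (1 / α)]
    rfl
  · rintro T' R' ⟨hd, hh, hR, hS⟩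
    have hTT : ∀ v ∈ A, T' v = T v := by
      intro v hv
      ext w
      have h := hS v hv (Fin.snoc w v)
      simp only [Fin.snoc_last, Fin.snoc_castSucc] at h
      rw [hR v hv w, add_zero, fderiv_apply_self_of_homogeneous (hd v hv) (hh v hv)] at h
      rw [hTdef, Pi.smul_apply, smul_apply, iotaC_apply, h, smul_apply, smul_smul,
        one_div_mul_cancel hα, one_smul]
    refine ⟨hTT, fun v hv => ?_⟩
    -- `A` is open, so agreement on `A` makes the derivatives agree at points of `A`.
    have hfd : fderiv ℝ T' v = fderiv ℝ T v :=
      Filter.EventuallyEq.fderiv_eq (Filter.eventually_of_mem (hA_open.mem_nhds hv) hTT)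
    ext w
    rw [sub_apply, vertDeriv_apply, ← hfd, hS v hv w, add_sub_cancel_left]
end

section
/- Let N : A → (E →L[ℝ] E) be differentiable and positively 1-homogeneous (the coefficients of a nonlinear connection in a chart). Define the associated spray coefficients G : A → E by G(v) := (1/2)·N(v)(v), the residue J : A → (E →L[ℝ] E) by J(v) := N(v) − fderiv ℝ G v, and the torsion by Tor(v)(w,u) := (fderiv ℝ N v u)(w) − (fderiv ℝ N v w)(u). Then for every v ∈ A and w ∈ E, J(v)(w) = (1/2)·Tor(v)(w, v). (Example 4.5: the residue of a nonlinear connection with respect to the level of sprays is one half of its Liouville-contracted torsion.) -/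
/-!
Euler's theorem for the 1-homogeneous map `N` gives `∂̇N(v)(v) = N(v)`, and the product rule for
evaluation gives `∂̇G(v)(w) = (1/2)(N(v)(w) + ∂̇N(v)(w)(v))`. Hence
`J(v)(w) = (1/2)(N(v)(w) - ∂̇N(v)(w)(v)) = (1/2)(∂̇N(v)(v)(w) - ∂̇N(v)(w)(v))`.
-/

/-- Euler's theorem in degree 1, by differentiating `t ↦ f (t • v)` at `t = 1` in two ways. -/
lemma fderiv_apply_self_of_homogeneous_s14
    {E F : Type*} [NormedAddCommGroup E] [NormedSpace ℝ E]
    [NormedAddCommGroup F] [NormedSpace ℝ F] {f : E → F} {v : E}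
    (hf : DifferentiableAt ℝ f v) (hom : ∀ t : ℝ, 0 < t → f (t • v) = t • f v) :
    fderiv ℝ f v v = f v := by
  have hray : HasDerivAt (fun t : ℝ => t • v) v 1 := by
    simpa using (hasDerivAt_id (1 : ℝ)).smul_const v
  have h1 : HasDerivAt (fun t : ℝ => f (t • v)) (fderiv ℝ f v v) 1 := by
    have hf' : HasFDerivAt f (fderiv ℝ f v) ((1 : ℝ) • v) := by
      rw [one_smul]
      exact hf.hasFDerivAt
    exact hf'.comp_hasDerivAt (1 : ℝ) hray
  have h2 : HasDerivAt (fun t : ℝ => t • f v) (f v) 1 := by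
    simpa using (hasDerivAt_id (1 : ℝ)).smul_const (f v)
  refine h1.unique (h2.congr_of_eventuallyEq ?_)
  filter_upwards [lt_mem_nhds (zero_lt_one : (0 : ℝ) < 1)] with t ht using hom t ht

/-- **Example 4.5, first part**: for a differentiable, positively 1-homogeneous nonlinear
connection `N` on the conic open set `A ⊆ E \ {0}`, with associated spray coefficients
`G(v) := (1/2)·N(v)(v)`, residue `J(v) := N(v) − ∂̇G(v)` and torsion
`Tor(v)(w,u) := (∂̇N(v)(u))(w) − (∂̇N(v)(w))(u)`, the residue of `N` with respect to the
level of sprays is one half of the Liouville-contracted torsion: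
`J(v)(w) = (1/2)·Tor(v)(w,v)`. -/
theorem stmt_14
    {E : Type*} [NormedAddCommGroup E] [NormedSpace ℝ E]
    (A : Set E) (hA_open : IsOpen A) (hA_ne : A.Nonempty)
    (hA_nz : ∀ v ∈ A, v ≠ 0)
    (hA_conic : ∀ v ∈ A, ∀ lam : ℝ, 0 < lam → lam • v ∈ A)
    (N : E → (E →L[ℝ] E))
    (hN_diff : ∀ v ∈ A, DifferentiableAt ℝ N v)
    (hN_hom : ∀ v ∈ A, ∀ lam : ℝ, 0 < lam → N (lam • v) = lam ^ (1 : ℝ) • N v)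
    (G : E → E) (hG : ∀ v : E, G v = (1 / 2 : ℝ) • N v v)
    (J : E → (E →L[ℝ] E)) (hJ : ∀ v : E, J v = N v - fderiv ℝ G v)
    (Tor : E → E → E → E)
    (hTor : ∀ v w u : E, Tor v w u = (fderiv ℝ N v u) w - (fderiv ℝ N v w) u) :
    ∀ v ∈ A, ∀ w : E, J v w = (1 / 2 : ℝ) • Tor v w v := by
  intro v hv w
  have euler : fderiv ℝ N v v = N v :=
    fderiv_apply_self_of_homogeneous_s14 (hN_diff v hv) fun t ht => by
      rw [hN_hom v hv t ht, Real.rpow_one]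
  have hGv := ((hN_diff v hv).hasFDerivAt.clm_apply (hasFDerivAt_id v)).const_smul (1 / 2 : ℝ)
  have hG' : G = (1 / 2 : ℝ) • fun y => N y (id y) := funext hG
  rw [hJ, hTor, euler, hG', hGv.fderiv]
  simp only [sub_apply, smul_apply,
    add_apply, ContinuousLinearMap.comp_apply,
    ContinuousLinearMap.flip_apply, ContinuousLinearMap.id_apply, id]
  module
end
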